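/- arXiv:2507.03309 — 2 statements merged into one kernel-verified Lean document; each statement's English description precedes it below -/
import Mathlib

section
/- In the poset of partitions — nonincreasing functions λ : ℤ_{>0} → ℕ ∪ {∞}, ordered by λ ⊆ μ iff λ_i ≤ μ_i for all i — every set of pairwise incomparable elements (antichain) is finite. -/
/-!
The region under the graph of a partition is a union of rectangles, finitely many because a
partition takes finitely many values. A rectangle is a lower set of columns together with a height,
so rectangles are well-quasi-ordered by Dickson's lemma and finite sets of rectangles by Higman's
lemma. If every rectangle of one partition lies inside a rectangle of another, then the first
partition lies below the second.
-/

section FiniteSets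

theorem exists_mem_rel_of_sublistForall₂ {α β : Type*} {r : α → β → Prop} {l₁ : List α}
    {l₂ : List β} (h : List.SublistForall₂ r l₁ l₂) {a : α} (ha : a ∈ l₁) : ∃ b ∈ l₂, r a b := by
  obtain ⟨l, hl, h_sub⟩ := List.sublistForall₂_iff.mp h
  obtain ⟨i, hi, rfl⟩ := List.getElem_of_mem ha
  have hi' : i < l.length := hl.length_eq ▸ hi
  exact ⟨l[i], h_sub.subset (List.getElem_mem hi'), hl.get hi hi'⟩

variable {α : Type*} {r : α → α → Prop} [IsPreorder α r]

theorem wellQuasiOrdered_sublistForall₂ (hr : WellQuasiOrdered r) :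
    WellQuasiOrdered (List.SublistForall₂ r) := by
  have h := Set.PartiallyWellOrderedOn.partiallyWellOrderedOn_sublistForall₂ r
    (Set.partiallyWellOrderedOn_univ_iff.mpr hr)
  simpa only [Set.mem_univ, implies_true, Set.ofPred_true,
    Set.partiallyWellOrderedOn_univ_iff] using h

theorem wellQuasiOrdered_finset_forall_exists (hr : WellQuasiOrdered r) :
    WellQuasiOrdered fun s t : Finset α => ∀ a ∈ s, ∃ b ∈ t, r a b := by
  intro s
  obtain ⟨m, n, hmn, h⟩ := wellQuasiOrdered_sublistForall₂ hr fun k => (s k).toList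
  refine ⟨m, n, hmn, fun a ha => ?_⟩
  simpa only [Finset.mem_toList] using
    exists_mem_rel_of_sublistForall₂ h (Finset.mem_toList.mpr ha)

end FiniteSets

theorem wellQuasiOrderedLE_of_lowerSet {ι : Type*} [Preorder ι]
    [WellQuasiOrderedLE (LowerSet ι)] : WellQuasiOrderedLE ι where
  wqo i := by
    obtain ⟨m, n, hmn, h⟩ := wellQuasiOrdered_le fun k => LowerSet.Iic (i k)
    exact ⟨m, n, hmn, LowerSet.Iic_le.mp h⟩

instance wellFoundedLT_lowerSet {ι : Type*} [LinearOrder ι] [WellFoundedLT ι] :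
    WellFoundedLT (LowerSet ι) := by
  rw [WellFoundedLT, isWellFounded_iff, RelEmbedding.wellFounded_iff_isEmpty]
  refine ⟨fun s => ?_⟩
  have h_lt (n : ℕ) : s (n + 1) < s n := s.map_rel_iff.mpr n.lt_succ_self
  choose i hi hi' using fun n => Set.exists_of_ssubset (LowerSet.coe_ssubset_coe.mpr (h_lt n))
  have h_anti : StrictAnti i := strictAnti_nat_of_succ_lt fun n =>
    lt_of_not_ge fun hle => hi' n ((s (n + 1)).lower hle (hi (n + 1)))
  exact not_strictAnti_of_wellFoundedLT i h_anti

theorem finite_range_of_antitone {ι α : Type*} [Preorder ι] [WellQuasiOrderedLE ι]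
    [PartialOrder α] [WellFoundedLT α] {f : ι → α} (hf : Antitone f) : (Set.range f).Finite := by
  by_contra h_inf
  let e := Set.Infinite.natEmbedding (Set.range f) h_inf
  choose i hi using fun n => (e n).2
  obtain ⟨g, hg⟩ := wellQuasiOrdered_le.exists_monotone_subseq i
  have h_anti : Antitone (f ∘ i ∘ g) := fun m n hmn => hf (hg m n hmn)
  have h_inj : Function.Injective (f ∘ i ∘ g) := fun m n hmn => by
    simp only [Function.comp_apply, hi] at hmn
    exact g.injective (e.injective (Subtype.ext hmn))
  exact not_strictAnti_of_wellFoundedLT _ (h_anti.strictAnti_of_injective h_inj)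

section Rectangles

variable {ι α : Type*} [Preorder ι]

/-- The superlevel set `{i | a ≤ f i}` of an antitone function, as a lower set. -/
def superlevelSet [Preorder α] {f : ι → α} (hf : Antitone f) (a : α) : LowerSet ι where
  carrier := {i | a ≤ f i}
  lower' _ _ hji hi := hi.trans (hf hji)

/-- The rectangles spanning the region under the graph of an antitone function `f`: the pair
`(s, a)` encodes the rectangle of height `a` over the columns in `s`, and there is one, of maximal
width, for each value `a` of `f`. -/
def rectangles [Preorder α] {f : ι → α} (hf : Antitone f) : Set (LowerSet ι × α) :=
  (fun a => (superlevelSet hf a, a)) '' Set.range f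

theorem le_of_forall_rectangles_exists_le [Preorder α] {f g : ι → α} (hf : Antitone f)
    (hg : Antitone g) (h : ∀ p ∈ rectangles hf, ∃ q ∈ rectangles hg, p ≤ q) : f ≤ g := by
  intro i
  obtain ⟨_, ⟨b, -, rfl⟩, h_cols, h_height⟩ := h _ ⟨f i, ⟨i, rfl⟩, rfl⟩
  have hi : i ∈ superlevelSet hf (f i) := le_refl (f i)
  have hb : b ≤ g i := h_cols hi
  exact h_height.trans hb

variable [PartialOrder α]

theorem finite_rectangles [WellQuasiOrderedLE ι] [WellFoundedLT α] {f : ι → α}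
    (hf : Antitone f) : (rectangles hf).Finite :=
  (finite_range_of_antitone hf).image _

variable [WellQuasiOrderedLE (LowerSet ι)] [WellQuasiOrderedLE α]

instance wellQuasiOrderedLE_antitone : WellQuasiOrderedLE {f : ι → α // Antitone f} where
  wqo f := by
    have : WellQuasiOrderedLE ι := wellQuasiOrderedLE_of_lowerSet
    obtain ⟨m, n, hmn, h⟩ := wellQuasiOrdered_finset_forall_exists
      (wellQuasiOrdered_le (α := LowerSet ι × α)) fun k => (finite_rectangles (f k).2).toFinset
    simp only [Set.Finite.mem_toFinset] at h
    exact ⟨m, n, hmn, le_of_forall_rectangles_exists_le (f m).2 (f n).2 h⟩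

theorem antichain_of_partitions_finite_general {S : Set {f : ι → α // Antitone f}}
    (hS : IsAntichain (· ≤ ·) S) : S.Finite :=
  WellQuasiOrderedLE.finite_of_isAntichain hS

end Rectangles

/-- In the poset of partitions (nonincreasing functions `ℤ_{>0} → ℕ ∪ {∞}`,
ordered by pointwise `≤`), every set of pairwise incomparable elements is finite. -/
theorem antichain_of_partitions_finite
    (S : Set {f : ℕ+ → ℕ∞ // Antitone f})
    (h : ∀ a ∈ S, ∀ b ∈ S, a ≠ b →
      ¬(∀ i : ℕ+, a.1 i ≤ b.1 i) ∧ ¬(∀ i : ℕ+, b.1 i ≤ a.1 i)) :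
    S.Finite :=
  antichain_of_partitions_finite_general fun a ha b hb hab => (h a ha b hb hab).1
end

section
/- Let p be a prime and let M be a (p−1) × (p−1) matrix over ℤ, with rows and columns indexed by 1, …, p−1, satisfying: M_{ij} = 2^{i−1}·j whenever i + j ≤ p, and M_{ij} = 2^{i−1}·j − p whenever i + j = p + 1 (the entries with i + j > p + 1 are arbitrary). Then det M = (−1)^{(p−1)(p−2)/2} · p^{p−2}; in particular det M ≠ 0. -/
/-! Subtracting the rank-one matrix with entries `2 ^ (i - 1) * j` from `M` leaves a matrix whose
first row and first column vanish, and whose remaining block has zeros above the antidiagonal and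
`-p` on it. Row operations with the first row remove the rank-one part everywhere below that row, so
`det M` is the top left entry `1` times the determinant of the block, which is the signed product of
its antidiagonal. -/

section CommRing

variable {R : Type*} [CommRing R] {n : ℕ}

theorem det_of_antitriangular (A : Matrix (Fin n) (Fin n) R) (hA : ∀ i j, j < i.rev → A i j = 0) :
    A.det = (-1) ^ n.choose 2 * ∏ i, A i i.rev := by
  induction n with
  | zero => simp
  | succ n ih =>
    have hfirst (j : Fin n) : A 0 j.castSucc = 0 :=
      hA _ _ (by simp [Fin.castSucc_lt_last])
    have hminor : (A.submatrix Fin.succ Fin.castSucc).det =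
        (-1) ^ n.choose 2 * ∏ i : Fin n, A i.succ i.rev.castSucc :=
      ih _ fun i j h ↦ hA _ _ (by simpa [Fin.rev_succ] using h)
    calc A.det = (-1) ^ n * A 0 (Fin.last n) * (A.submatrix Fin.succ Fin.castSucc).det := by
          simp [Matrix.det_succ_row_zero, Fin.sum_univ_castSucc, hfirst]
      _ = (-1) ^ (n + n.choose 2) * (A 0 (Fin.last n) * ∏ i : Fin n, A i.succ i.rev.castSucc) := by
          rw [hminor]; ring
      _ = (-1) ^ (n + 1).choose 2 * ∏ i, A i i.rev := by
          simp [Fin.prod_univ_succ, Fin.rev_succ, Nat.choose_succ_succ' n 1]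

theorem det_add_vecMulVec_of_zero_border (T : Matrix (Fin (n + 1)) (Fin (n + 1)) R)
    (a v : Fin (n + 1) → R) (hrow : ∀ j, T 0 j = 0) (hcol : ∀ i, T i 0 = 0) :
    (T + Matrix.vecMulVec a v).det = a 0 * v 0 * (T.submatrix Fin.succ Fin.succ).det := by
  set M := T + Matrix.vecMulVec a v with hM
  -- The factor `a 0` need not be invertible, so it is pulled out of row 0 before eliminating.
  have hscale : M = M.updateRow 0 (a 0 • v) := by
    have hM0 : a 0 • v = M 0 := by
      ext j
      simp [hM, Matrix.vecMulVec_apply, hrow]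
    rw [hM0, Matrix.updateRow_eq_self]
  have helim : (M.updateRow 0 v).det = (T.updateRow 0 v).det :=
    Matrix.det_eq_of_forall_row_eq_smul_add_const (Function.update a 0 0) 0 (by simp)
      (Fin.cases (by simp) fun i j ↦ by simp [hM, Matrix.vecMulVec_apply])
  have hexpand : (T.updateRow 0 v).det = v 0 * (T.submatrix Fin.succ Fin.succ).det := by
    have hminor :
        (T.updateRow 0 v).submatrix Fin.succ Fin.succ = T.submatrix Fin.succ Fin.succ := by
      simpa using Matrix.submatrix_updateRow_succAbove T v Fin.succ 0
    simp [Matrix.det_succ_column_zero, Fin.sum_univ_succ, hcol, hminor]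
  rw [hscale, Matrix.det_updateRow_smul, helim, hexpand, mul_assoc]

theorem det_of_matrix_general (M : Matrix (Fin (n + 1)) (Fin (n + 1)) R) (a v : Fin (n + 1) → R)
    (c : Fin n → R) (hupper : ∀ i j : Fin (n + 1), (i : ℕ) + j ≤ n → M i j = a i * v j)
    (hanti : ∀ i : Fin n, M i.succ i.rev.succ = a i.succ * v i.rev.succ - c i) :
    M.det = (-1) ^ (n + 1).choose 2 * (a 0 * v 0 * ∏ i, c i) := by
  set T := M - Matrix.vecMulVec a v with hT
  have hzero (i j : Fin (n + 1)) (hij : (i : ℕ) + j ≤ n) : T i j = 0 := by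
    simp [hT, Matrix.vecMulVec_apply, hupper i j hij]
  have hTanti (i : Fin n) : T i.succ i.rev.succ = -c i := by
    simp [hT, Matrix.vecMulVec_apply, hanti]
  have hblock : (T.submatrix Fin.succ Fin.succ).det = (-1) ^ n.choose 2 * ∏ i, -c i := by
    have hblock_upper (i j : Fin n) (hij : j < i.rev) : T.submatrix Fin.succ Fin.succ i j = 0 :=
      hzero _ _ (by grind)
    simp [det_of_antitriangular _ hblock_upper, hTanti]
  calc M.det = (T + Matrix.vecMulVec a v).det := by rw [hT, sub_add_cancel]
    _ = a 0 * v 0 * (T.submatrix Fin.succ Fin.succ).det :=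
      det_add_vecMulVec_of_zero_border T a v (fun j ↦ hzero 0 j (by simp; omega))
        (fun i ↦ hzero i 0 (by simp; omega))
    _ = (-1) ^ (n + 1).choose 2 * (a 0 * v 0 * ∏ i, c i) := by
      rw [hblock, Finset.prod_neg, Finset.card_fin, Nat.choose_succ_succ' n 1, Nat.choose_one_right]
      ring

end CommRing

/-- Let `p` be prime and `M` a `(p-1) × (p-1)` integer matrix (rows and columns
indexed by `1, ..., p-1`) with `M i j = 2^(i-1) * j` when `i + j ≤ p` and
`M i j = 2^(i-1) * j - p` when `i + j = p + 1`.  Then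
`det M = (-1)^((p-1)(p-2)/2) * p^(p-2) ≠ 0`. -/
theorem det_of_matrix (p : ℕ) (hp : p.Prime) (M : Matrix (Fin (p - 1)) (Fin (p - 1)) ℤ)
    (h1 : ∀ i j : Fin (p - 1), (i : ℕ) + 1 + ((j : ℕ) + 1) ≤ p →
      M i j = 2 ^ (i : ℕ) * ((j : ℕ) + 1))
    (h2 : ∀ i j : Fin (p - 1), (i : ℕ) + 1 + ((j : ℕ) + 1) = p + 1 →
      M i j = 2 ^ (i : ℕ) * ((j : ℕ) + 1) - p) :
    M.det = (-1) ^ ((p - 1) * (p - 2) / 2) * (p : ℤ) ^ (p - 2) ∧ M.det ≠ 0 := by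
  obtain ⟨n, rfl⟩ := Nat.exists_eq_add_of_le' hp.two_le
  have hdet : M.det = (-1) ^ ((n + 1) * n / 2) * ((n + 2 : ℕ) : ℤ) ^ n := by
    simpa [Nat.choose_two_right] using
      det_of_matrix_general M (fun i ↦ 2 ^ (i : ℕ)) (fun j ↦ (j : ℕ) + 1) (fun _ ↦ (n + 2 : ℕ))
        (fun i j h ↦ h1 i j (by omega)) (fun i ↦ h2 _ _ (by simp; omega))
  exact ⟨hdet, by rw [hdet]; positivity⟩
end
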